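/- (Kolmogorov's inequality) Let 0 < k < r be integers and f ∈ L^r_{∞,∞}. Then f^{(k)} is bounded and M_k(f) ≤ (‖φ_{r−k}‖ / ‖φ_r‖^{1−k/r}) · M_0(f)^{1−k/r} · M_r(f)^{k/r}. -/

import Mathlib

open MeasureTheory Filter

noncomputable section

/-- The uniform norm `‖f‖ = sup_{t ∈ ℝ} |f t|` of a function `f : ℝ → ℝ`. -/
def unif (f : ℝ → ℝ) : ℝ := ⨆ t : ℝ, |f t|

/-- `M k f = ‖f⁽ᵏ⁾‖`, the uniform norm of the `k`-th derivative of `f`. -/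
def M (k : ℕ) (f : ℝ → ℝ) : ℝ := unif (iteratedDeriv k f)

/-- The class `L^r_{∞,∞}`: bounded functions `f : ℝ → ℝ` having `r-1` (continuous)
derivatives, with `f⁽ʳ⁻¹⁾` locally absolutely continuous and `f⁽ʳ⁾` essentially bounded;
the last two conditions are equivalent to `f⁽ʳ⁻¹⁾` being Lipschitz. -/
def MemL (r : ℕ) (f : ℝ → ℝ) : Prop :=
  Continuous f ∧ (∃ C : ℝ, ∀ t : ℝ, |f t| ≤ C) ∧ ContDiff ℝ (r - 1 : ℕ) f ∧
    ∃ K : NNReal, LipschitzWith K (iteratedDeriv (r - 1) f)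

/-- The Euler perfect spline `φ_r`: the `r`-th `2π`-periodic antiderivative with zero
mean value of `t ↦ sgn (sin t)`. -/
def eulerPhi : ℕ → ℝ → ℝ
  | 0 => fun t => Real.sign (Real.sin t)
  | (s + 1) => fun t =>
      (∫ x in (0:ℝ)..t, eulerPhi s x) -
        (1 / (2 * Real.pi)) * ∫ x in (0:ℝ)..(2 * Real.pi), ∫ u in (0:ℝ)..x, eulerPhi s u

/-- `φ_{λ,r}(t) = λ^{-r} φ_r (λ t)`. -/
def eulerPhiL (lam : ℝ) (r : ℕ) (t : ℝ) : ℝ := lam ^ (-(r : ℤ)) * eulerPhi r (lam * t)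

/-- The basic step function: `0` on `[0,a]`, `1` on `(a, a+b]`, `0` after `a+b`. -/
def psiBase (a b : ℝ) (t : ℝ) : ℝ := if t ≤ a then 0 else if t ≤ a + b then 1 else 0

/-- `psiBase` continued evenly with respect to the point `a+b+c`. -/
def psiHalf (a b c t : ℝ) : ℝ :=
  if t ≤ a + b + c then psiBase a b t else psiBase a b (2 * (a + b + c) - t)

/-- The Rodov step function `ψ_0(a,b,c)`: equal to `psiBase` on `[0, a+b+c]`, continued
evenly with respect to `a+b+c`, then oddly with respect to `2(a+b+c)`, then
`4(a+b+c)`-periodically. -/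
def psiZero (a b c t : ℝ) : ℝ :=
  if (t - 4 * (a + b + c) * ⌊t / (4 * (a + b + c))⌋) ≤ 2 * (a + b + c) then
    psiHalf a b c (t - 4 * (a + b + c) * ⌊t / (4 * (a + b + c))⌋)
  else
    -psiHalf a b c (4 * (a + b + c) - (t - 4 * (a + b + c) * ⌊t / (4 * (a + b + c))⌋))

/-- `ψ_s(a,b,c)`: the `s`-th periodic antiderivative of `ψ_0(a,b,c)` with zero mean
value over the period `[0, 4(a+b+c)]`. -/
def psi : ℕ → ℝ → ℝ → ℝ → ℝ → ℝ
  | 0 => psiZero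
  | (s + 1) => fun a b c t =>
      (∫ x in (0:ℝ)..t, psi s a b c x) -
        (1 / (4 * (a + b + c))) *
          ∫ x in (0:ℝ)..(4 * (a + b + c)), ∫ u in (0:ℝ)..x, psi s a b c u

/-- The modulus of continuity `ω(D^k, X; δ) = sup {‖f⁽ᵏ⁾‖ : f ∈ X, ‖f‖ ≤ δ}` of the
differentiation operator `D^k` on a class `X`. -/
def omegaMod (k : ℕ) (X : Set (ℝ → ℝ)) (δ : ℝ) : ℝ :=
  sSup {y : ℝ | ∃ f ∈ X, M 0 f ≤ δ ∧ M k f = y}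

end

noncomputable def ES : ℕ → ℝ → ℝ
  | 0 => Real.sign
  | (s + 1) => fun t => ∫ u in (0:ℝ)..t, ES s (Real.pi / 2 - |u|)

lemma sign_meas : Measurable Real.sign := by
  unfold Real.sign
  refine Measurable.ite measurableSet_Iio measurable_const ?_
  exact Measurable.ite measurableSet_Ioi measurable_const measurable_const

lemma sign_abs_le (x : ℝ) : |Real.sign x| ≤ 1 := by
  rcases Real.sign_apply_eq x with h | h | h <;> rw [h] <;> norm_num

lemma ii_of_bdd {g : ℝ → ℝ} (hg : Measurable g) (hb : ∀ x, |g x| ≤ 1) (a b : ℝ) :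
    IntervalIntegrable g volume a b := by
  refine IntervalIntegrable.mono_fun (f := fun _ => (1:ℝ)) intervalIntegrable_const
    hg.aestronglyMeasurable ?_
  filter_upwards with x
  simpa using hb x

lemma ES_cont (n : ℕ) : Continuous (ES (n + 1)) := by
  induction n with
  | zero =>
    show Continuous (fun t => ∫ u in (0:ℝ)..t, Real.sign (Real.pi / 2 - |u|))
    apply intervalIntegral.continuous_primitive
    apply ii_of_bdd
    · exact sign_meas.comp (by fun_prop)
    · intro x; exact sign_abs_le _
  | succ n ih =>
    show Continuous (fun t => ∫ u in (0:ℝ)..t, ES (n+1) (Real.pi / 2 - |u|))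
    apply intervalIntegral.continuous_primitive
    intro a b
    apply Continuous.intervalIntegrable
    fun_prop

lemma ES_deriv (n : ℕ) (t : ℝ) :
    HasDerivAt (ES (n + 2)) (ES (n + 1) (Real.pi / 2 - |t|)) t := by
  have h := ES_cont n
  have hc : Continuous (fun u : ℝ => ES (n+1) (Real.pi / 2 - |u|)) := by fun_prop
  exact intervalIntegral.integral_hasDerivAt_right (hc.intervalIntegrable _ _)
    (hc.stronglyMeasurableAtFilter _ _) hc.continuousAt

lemma ES_odd (n : ℕ) (t : ℝ) : ES n (-t) = - ES n t := by
  cases n with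
  | zero => exact Real.sign_neg
  | succ n =>
    show ∫ u in (0:ℝ)..(-t), ES n (Real.pi / 2 - |u|) = - ∫ u in (0:ℝ)..t, ES n (Real.pi / 2 - |u|)
    have h := intervalIntegral.integral_comp_neg (a := 0) (b := t)
      (fun u => ES n (Real.pi / 2 - |u|))
    simp only [abs_neg, neg_zero] at h
    rw [h, intervalIntegral.integral_symm]

lemma ES_zero (n : ℕ) : ES n 0 = 0 := by
  have := ES_odd n 0
  rw [neg_zero] at this
  linarith

lemma ES_one {t : ℝ} (h1 : -(Real.pi/2) ≤ t) (h2 : t ≤ Real.pi/2) : ES 1 t = t := by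
  show ∫ u in (0:ℝ)..t, Real.sign (Real.pi / 2 - |u|) = t
  have : ∫ u in (0:ℝ)..t, Real.sign (Real.pi / 2 - |u|) = ∫ u in (0:ℝ)..t, (1:ℝ) := by
    apply intervalIntegral.integral_congr_ae
    have hp := Real.pi_pos
    have h3 : ∀ᵐ u : ℝ, u ≠ Real.pi/2 := by simp [ae_iff]
    have h4 : ∀ᵐ u : ℝ, u ≠ -(Real.pi/2) := by simp [ae_iff]
    filter_upwards [h3, h4] with u h3 h4 hu
    apply Real.sign_of_pos
    have : |u| < Real.pi / 2 := by
      rw [Set.mem_uIoc] at hu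
      rw [abs_lt]
      constructor
      · apply lt_of_le_of_ne _ (Ne.symm h4)
        rcases hu with hu | hu <;> linarith
      · apply lt_of_le_of_ne _ h3
        rcases hu with hu | hu <;> linarith
    linarith
  rw [this]; simp

lemma ES_mono_pos (n : ℕ) : StrictMonoOn (ES (n+1)) (Set.Icc (-(Real.pi/2)) (Real.pi/2)) := by
  have hp := Real.pi_pos
  induction n with
  | zero =>
    intro x hx y hy hxy
    rw [zero_add, ES_one hx.1 hx.2, ES_one hy.1 hy.2]; exact hxy
  | succ n ih =>
    apply strictMonoOn_of_deriv_pos (convex_Icc _ _) (ES_cont _).continuousOn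
    intro x hx
    rw [interior_Icc] at hx
    rw [(ES_deriv n x).deriv]
    have hx' : |x| < Real.pi/2 := abs_lt.2 hx
    have := abs_nonneg x
    rw [← ES_zero (n+1)]
    apply ih <;> first | constructor <;> linarith | linarith

lemma ES_pos (n : ℕ) {t : ℝ} (h : 0 < t) (h2 : t ≤ Real.pi/2) : 0 < ES (n+1) t := by
  have hp := Real.pi_pos
  rw [← ES_zero (n+1)]
  apply ES_mono_pos n _ _ h <;> constructor <;> linarith

lemma ES_A_pos (n : ℕ) : 0 < ES (n+1) (Real.pi/2) := ES_pos n (by positivity) le_rfl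

lemma ES_surj (n : ℕ) {y : ℝ} (hy : |y| ≤ ES (n+1) (Real.pi/2)) :
    ∃ a, -(Real.pi/2) ≤ a ∧ a ≤ Real.pi/2 ∧ ES (n+1) a = y := by
  have hp := Real.pi_pos
  have h := intermediate_value_Icc (show -(Real.pi/2) ≤ Real.pi/2 by linarith)
    (ES_cont n).continuousOn
  have hy' := abs_le.1 hy
  rw [ES_odd] at h
  obtain ⟨a, ha, hay⟩ := h hy'
  exact ⟨a, ha.1, ha.2, hay⟩

lemma ES_le (n : ℕ) {a b : ℝ} (ha : -(Real.pi/2) ≤ a) (hb : b ≤ Real.pi/2) (hab : a ≤ b) :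
    ES (n+1) a ≤ ES (n+1) b :=
  (ES_mono_pos n).monotoneOn ⟨ha, by linarith⟩ ⟨by linarith, hb⟩ hab

lemma ES_lt (n : ℕ) {a b : ℝ} (ha : -(Real.pi/2) ≤ a) (hb : b ≤ Real.pi/2) (hab : a < b) :
    ES (n+1) a < ES (n+1) b :=
  (ES_mono_pos n) ⟨ha, by linarith⟩ ⟨by linarith, hb⟩ hab

lemma le_of_ES_le (n : ℕ) {a b : ℝ} (hb : -(Real.pi/2) ≤ b) (ha : a ≤ Real.pi/2)
    (h : ES (n+1) a ≤ ES (n+1) b) : a ≤ b := by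
  by_contra hc
  push Not at hc
  have := ES_lt n hb ha hc
  linarith

/-- properties of the Euler spline -/
lemma euler_prop (s : ℕ) :
    (∀ a b, IntervalIntegrable (eulerPhi s) volume a b) ∧
    (∀ t, eulerPhi s (t + Real.pi) = - eulerPhi s t) ∧
    (∀ t, -(Real.pi/2) ≤ t → t ≤ Real.pi/2 → eulerPhi s (t + s * (Real.pi/2)) = ES s t) := by
  have hp := Real.pi_pos
  induction s with
  | zero =>
    refine ⟨?_, ?_, ?_⟩
    · apply ii_of_bdd
      · exact sign_meas.comp Real.measurable_sin
      · intro x; exact sign_abs_le _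
    · intro t
      show Real.sign (Real.sin (t + Real.pi)) = - Real.sign (Real.sin t)
      rw [Real.sin_add_pi, Real.sign_neg]
    · intro t h1 h2
      show Real.sign (Real.sin (t + (0:ℕ) * (Real.pi/2))) = Real.sign t
      rw [Nat.cast_zero, zero_mul, add_zero]
      rcases lt_trichotomy t 0 with h | h | h
      · rw [Real.sign_of_neg h, Real.sign_of_neg]
        exact Real.sin_neg_of_neg_of_neg_pi_lt h (by linarith)
      · rw [h]; simp
      · rw [Real.sign_of_pos h, Real.sign_of_pos]
        exact Real.sin_pos_of_pos_of_lt_pi h (by linarith)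
  | succ s ih =>
    obtain ⟨hi, ha, hs⟩ := ih
    set c := (1 / (2 * Real.pi)) * ∫ x in (0:ℝ)..(2 * Real.pi), ∫ u in (0:ℝ)..x, eulerPhi s u
      with hc
    have hdef : ∀ t, eulerPhi (s+1) t = (∫ x in (0:ℝ)..t, eulerPhi s x) - c := fun t => rfl
    have hcont0 : Continuous (fun t => ∫ x in (0:ℝ)..t, eulerPhi s x) :=
      intervalIntegral.continuous_primitive hi 0
    have hcont : Continuous (eulerPhi (s+1)) := by
      have : eulerPhi (s+1) = fun t => (∫ x in (0:ℝ)..t, eulerPhi s x) - c := funext hdef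
      rw [this]; exact hcont0.sub continuous_const
    have hsub : ∀ a b, eulerPhi (s+1) b - eulerPhi (s+1) a = ∫ x in a..b, eulerPhi s x := by
      intro a b
      rw [hdef, hdef, ← intervalIntegral.integral_interval_sub_left (hi 0 b) (hi 0 a)]
      ring
    have hmean : ∫ x in (0:ℝ)..(2*Real.pi), eulerPhi (s+1) x = 0 := by
      simp_rw [hdef]
      rw [intervalIntegral.integral_sub (hcont0.intervalIntegrable _ _) (by simp)]
      rw [intervalIntegral.integral_const, hc]
      simp only [smul_eq_mul, sub_zero]
      field_simp
      ring
    have hsum : ∀ t, eulerPhi (s+1) (t + Real.pi) + eulerPhi (s+1) t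
        = eulerPhi (s+1) (0 + Real.pi) + eulerPhi (s+1) 0 := by
      intro t
      have h1 := hsub (0 + Real.pi) (t + Real.pi)
      have h2 := hsub 0 t
      rw [← intervalIntegral.integral_comp_add_right] at h1
      simp_rw [ha] at h1
      rw [intervalIntegral.integral_neg] at h1
      linarith
    have hanti : ∀ t, eulerPhi (s+1) (t + Real.pi) = - eulerPhi (s+1) t := by
      set d := eulerPhi (s+1) (0 + Real.pi) + eulerPhi (s+1) 0 with hd
      have hd0 : d = 0 := by
        have h1 : ∫ x in (0:ℝ)..Real.pi, (eulerPhi (s+1) (x + Real.pi) + eulerPhi (s+1) x)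
            = Real.pi * d := by
          simp_rw [hsum]; simp
        rw [intervalIntegral.integral_add
          ((show Continuous (fun x => eulerPhi (s+1) (x + Real.pi)) by fun_prop).intervalIntegrable _ _)
          (hcont.intervalIntegrable _ _),
          intervalIntegral.integral_comp_add_right, add_comm,
          zero_add, intervalIntegral.integral_add_adjacent_intervals
          (hcont.intervalIntegrable _ _) (hcont.intervalIntegrable _ _),
          ← two_mul, hmean] at h1
        rcases mul_eq_zero.1 h1.symm with h | h
        · linarith
        · exact h
      intro t
      have := hsum t
      linarith
    refine ⟨fun a b => hcont.intervalIntegrable a b, hanti, ?_⟩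
    have key : ∀ t, -(Real.pi/2) ≤ t → t ≤ Real.pi/2 →
        eulerPhi (s+1) (t + (s+1:ℕ) * (Real.pi/2))
          = eulerPhi (s+1) (0 + (s+1:ℕ) * (Real.pi/2)) + ES (s+1) t := by
      intro t h1 h2
      have h := hsub (0 + (s+1:ℕ) * (Real.pi/2)) (t + (s+1:ℕ) * (Real.pi/2))
      rw [← intervalIntegral.integral_comp_add_right] at h
      have h3 : ∫ x in (0:ℝ)..t, eulerPhi s (x + (s+1:ℕ) * (Real.pi/2)) = ES (s+1) t := by
        show _ = ∫ u in (0:ℝ)..t, ES s (Real.pi / 2 - |u|)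
        apply intervalIntegral.integral_congr
        intro u hu
        rw [Set.mem_uIcc] at hu
        simp only
        rcases le_total u 0 with hu0 | hu0
        · rw [abs_of_nonpos hu0]
          have hul : -(Real.pi/2) ≤ u := by rcases hu with hu | hu <;> linarith
          rw [← hs _ (by linarith) (by linarith)]
          congr 1; push_cast; ring
        · rw [abs_of_nonneg hu0]
          have hul : u ≤ Real.pi/2 := by rcases hu with hu | hu <;> linarith
          have e : u + (s+1:ℕ) * (Real.pi/2) = ((u - Real.pi/2) + s * (Real.pi/2)) + Real.pi := by
            push_cast; ring
          rw [e, ha, hs _ (by linarith) (by linarith), ← ES_odd]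
          congr 1; ring
      linarith
    have h0 : eulerPhi (s+1) (0 + (s+1:ℕ) * (Real.pi/2)) = 0 := by
      have h1 := key (Real.pi/2) (by linarith) le_rfl
      have h2 := key (-(Real.pi/2)) le_rfl (by linarith)
      have h3 := hanti (-(Real.pi/2) + (s+1:ℕ) * (Real.pi/2))
      have e : -(Real.pi/2) + (s+1:ℕ) * (Real.pi/2) + Real.pi
        = Real.pi/2 + (s+1:ℕ) * (Real.pi/2) := by ring
      rw [e] at h3
      rw [ES_odd] at h2
      linarith
    intro t h1 h2
    rw [key t h1 h2, h0, zero_add]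

lemma unif_euler (n : ℕ) : unif (eulerPhi (n+1)) = ES (n+1) (Real.pi/2) := by
  have hp := Real.pi_pos
  obtain ⟨_, ha, hs⟩ := euler_prop (n+1)
  have hper : Function.Periodic (fun t => |eulerPhi (n+1) t|) Real.pi := by
    intro t; simp only [ha, abs_neg]
  have hb : ∀ t, |eulerPhi (n+1) t| ≤ ES (n+1) (Real.pi/2) := by
    intro t
    obtain ⟨y, hy, hty⟩ := hper.exists_mem_Ico hp t
      (-(Real.pi/2) + (n+1:ℕ) * (Real.pi/2))
    rw [hty]
    have e : y = (y - (n+1:ℕ) * (Real.pi/2)) + (n+1:ℕ) * (Real.pi/2) := by ring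
    have l1 : -(Real.pi/2) ≤ y - (n+1:ℕ) * (Real.pi/2) := by linarith [hy.1]
    have l2 : y - (n+1:ℕ) * (Real.pi/2) ≤ Real.pi/2 := by linarith [hy.2]
    rw [e, hs _ l1 l2, abs_le]
    constructor
    · rw [← ES_odd]; exact ES_le n le_rfl l2 l1
    · exact ES_le n l1 le_rfl l2
  apply le_antisymm
  · exact ciSup_le hb
  · have h := le_ciSup (f := fun t => |eulerPhi (n+1) t|) ⟨_, Set.forall_mem_range.2 hb⟩
      (Real.pi/2 + (n+1:ℕ) * (Real.pi/2))
    rw [hs _ (by linarith) le_rfl] at h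
    exact (le_abs_self _).trans h

/-- `f⁽ⁿ⁾` exists and is `K`-Lipschitz -/
def WK (K : ℝ) : ℕ → (ℝ → ℝ) → Prop
  | 0, f => ∀ x y, |f x - f y| ≤ K * |x - y|
  | (n + 1), f => Differentiable ℝ f ∧ WK K n (deriv f)

lemma WK_scale (n : ℕ) : ∀ (K : ℝ) (f : ℝ → ℝ) (a c : ℝ), WK K n f →
    WK (|a| * |c| ^ (n+1) * K) n (fun t => a * f (c * t)) := by
  induction n with
  | zero =>
    intro K f a c h x y
    have := h (c * x) (c * y)
    rw [← mul_sub, abs_mul]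
    rw [← mul_sub, abs_mul c] at this
    calc |a| * |f (c * x) - f (c * y)| ≤ |a| * (K * (|c| * |x - y|)) := by gcongr
      _ = _ := by ring
  | succ n ih =>
    intro K f a c h
    have hd : ∀ t, HasDerivAt (fun t => a * f (c * t)) ((a * c) * deriv f (c * t)) t := by
      intro t
      have h1 : HasDerivAt (fun t => c * t) c t := by
        simpa using (hasDerivAt_id t).const_mul c
      have h2 := ((h.1 (c * t)).hasDerivAt.comp t h1).const_mul a
      rw [mul_assoc, mul_comm c]
      exact h2
    refine ⟨fun t => (hd t).differentiableAt, ?_⟩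
    have e : deriv (fun t => a * f (c * t)) = fun t => (a * c) * deriv f (c * t) :=
      funext fun t => (hd t).deriv
    rw [e]
    have := ih K (deriv f) (a * c) c h.2
    convert this using 1
    rw [abs_mul]; ring

lemma WK_neg {n : ℕ} {K : ℝ} {f : ℝ → ℝ} (h : WK K n f) : WK K n (fun t => - f t) := by
  have := WK_scale n K f (-1) 1 h
  simpa using this

lemma WK_negneg {n : ℕ} {K : ℝ} {f : ℝ → ℝ} (h : WK K n f) : WK K n (fun t => - f (-t)) := by
  have := WK_scale n K f (-1) (-1) h
  simpa using this

lemma lip_of_deriv {f : ℝ → ℝ} {C : ℝ} (hf : Differentiable ℝ f) (hC : ∀ t, |deriv f t| ≤ C)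
    (x y : ℝ) : |f x - f y| ≤ C * |x - y| := by
  have := Convex.norm_image_sub_le_of_norm_deriv_le (f := f) (s := Set.univ) (x := y) (y := x)
    (C := C) (fun x _ => hf x) (fun x _ => hC x) convex_univ trivial trivial
  simpa using this

lemma deriv_bdd_of_lip {f : ℝ → ℝ} {C : ℝ} (hC : ∀ x y, |f x - f y| ≤ C * |x - y|) (t : ℝ) :
    |deriv f t| ≤ C := by
  have hC0 : 0 ≤ C := by
    have := hC 1 0
    have h2 := abs_nonneg (f 1 - f 0)
    norm_num at this
    linarith
  have : LipschitzWith ⟨C, hC0⟩ f := by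
    apply LipschitzWith.of_dist_le_mul
    intro x y
    exact hC x y
  exact norm_deriv_le_of_lipschitz this

lemma shift_deriv {f : ℝ → ℝ} (hf : Differentiable ℝ f) (t : ℝ) :
    HasDerivAt (fun t => f (t + 1) - f t) (deriv f (t+1) - deriv f t) t := by
  have h1 : HasDerivAt (fun t => f (t + 1)) (deriv f (t+1)) t :=
    (hf (t+1)).hasDerivAt.comp_add_const t 1
  exact h1.sub (hf t).hasDerivAt

lemma WK_shift (n : ℕ) : ∀ (K : ℝ) (f : ℝ → ℝ), WK K (n+1) f →
    WK K n (fun t => f (t + 1) - f t) := by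
  induction n with
  | zero =>
    intro K f h
    apply lip_of_deriv (fun t => (shift_deriv h.1 t).differentiableAt)
    intro t
    rw [(shift_deriv h.1 t).deriv]
    simpa using h.2 (t+1) t
  | succ n ih =>
    intro K f h
    refine ⟨fun t => (shift_deriv h.1 t).differentiableAt, ?_⟩
    have e : deriv (fun t => f (t + 1) - f t) = fun t => deriv f (t + 1) - deriv f t :=
      funext fun t => (shift_deriv h.1 t).deriv
    rw [e]
    exact ih K _ h.2

lemma bdd_step {f : ℝ → ℝ} {K C : ℝ} (hf : Differentiable ℝ f)
    (hl : ∀ x y, |deriv f x - deriv f y| ≤ K * |x - y|)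
    (hC : ∀ t, |f (t+1) - f t| ≤ C) (t : ℝ) : |deriv f t| ≤ C + |K| := by
  obtain ⟨c, hc, hcs⟩ := exists_deriv_eq_slope f (show t < t + 1 by linarith)
    hf.continuous.continuousOn hf.differentiableOn
  have h1 : |deriv f c| ≤ C := by
    rw [hcs]; simpa using hC t
  have h2 : |deriv f t - deriv f c| ≤ |K| := by
    refine (hl t c).trans ?_
    have : |t - c| ≤ 1 := by rw [abs_le]; constructor <;> linarith [hc.1, hc.2]
    calc K * |t - c| ≤ |K| * |t - c| := by gcongr; exact le_abs_self K
      _ ≤ |K| * 1 := by gcongr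
      _ = |K| := mul_one _
  have h3 := abs_sub_abs_le_abs_sub (deriv f t) (deriv f c)
  linarith

lemma WK_lower (n : ℕ) : ∀ (K K' : ℝ) (f : ℝ → ℝ), WK K (n+2) f →
    WK K' n (fun t => f (t + 1) - f t) → ∃ K'', WK K'' (n+1) f := by
  induction n with
  | zero =>
    intro K K' f h h'
    refine ⟨K' + |K|, h.1, ?_⟩
    apply lip_of_deriv h.2.1
    apply bdd_step h.2.1 h.2.2
    intro t
    have := deriv_bdd_of_lip h' t
    rwa [(shift_deriv h.1 t).deriv] at this
  | succ n ih =>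
    intro K K' f h h'
    have e : deriv (fun t => f (t + 1) - f t) = fun t => deriv f (t + 1) - deriv f t :=
      funext fun t => (shift_deriv h.1 t).deriv
    have h2 := h'.2
    rw [e] at h2
    obtain ⟨K'', h3⟩ := ih K K' (deriv f) h.2 h2
    exact ⟨K'', h.1, h3⟩

lemma WK_down (n : ℕ) : ∀ (K C : ℝ) (f : ℝ → ℝ), WK K (n+1) f → (∀ t, |f t| ≤ C) →
    ∃ K', WK K' n f := by
  induction n with
  | zero =>
    intro K C f h hC
    refine ⟨(C + C) + |K|, ?_⟩
    apply lip_of_deriv h.1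
    apply bdd_step h.1 h.2
    intro t
    exact (abs_sub _ _).trans (add_le_add (hC _) (hC _))
  | succ n ih =>
    intro K C f h hC
    obtain ⟨K', h'⟩ := ih K (C + C) _ (WK_shift (n+1) K f h)
      (fun t => (abs_sub _ _).trans (add_le_add (hC _) (hC _)))
    exact WK_lower n K K' f h h'

lemma WK_bdd (n : ℕ) : ∀ (K C : ℝ) (f : ℝ → ℝ), WK K n f → (∀ t, |f t| ≤ C) →
    ∃ K', ∀ t, |deriv f t| ≤ K' := by
  induction n with
  | zero =>
    intro K C f h _
    exact ⟨K, deriv_bdd_of_lip h⟩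
  | succ n ih =>
    intro K C f h hC
    obtain ⟨K', h'⟩ := WK_down n K C f h hC
    exact ih K' C f h' hC

/-- comparison property -/
def Cmp (n : ℕ) (g : ℝ → ℝ) : Prop :=
  ∀ x y a b, -(Real.pi/2) ≤ a → a ≤ Real.pi/2 → -(Real.pi/2) ≤ b → b ≤ Real.pi/2 →
    g x = ES (n+1) a → g y = ES (n+1) b → |a - b| ≤ |x - y|

lemma Cmp_negneg {n : ℕ} {g : ℝ → ℝ} (h : Cmp n g) : Cmp n (fun t => g (-t)) := by
  intro x y a b h1 h2 h3 h4 h5 h6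
  have := h (-x) (-y) a b h1 h2 h3 h4 h5 h6
  have e : |-x - -y| = |x - y| := by rw [← abs_neg]; congr 1; ring
  rwa [e] at this

lemma Cmp_neg {n : ℕ} {g : ℝ → ℝ} (h : Cmp n g) : Cmp n (fun t => - g t) := by
  intro x y a b h1 h2 h3 h4 h5 h6
  have := h x y (-a) (-b) (by linarith) (by linarith) (by linarith) (by linarith)
    (by rw [ES_odd]; linarith) (by rw [ES_odd]; linarith)
  have e : |-a - -b| = |a - b| := by rw [← abs_neg]; congr 1; ring
  rwa [e] at this

lemma half {n : ℕ} {f : ℝ → ℝ} (hf : Differentiable ℝ f) (hc : Cmp n (deriv f))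
    (hb : ∀ t, |deriv f t| ≤ ES (n+1) (Real.pi/2)) {ξ b : ℝ} (hb0 : 0 ≤ b)
    (hb1 : b ≤ Real.pi/2) (h : deriv f ξ = ES (n+1) b) :
    f ξ + (ES (n+2) (Real.pi/2) - ES (n+2) (Real.pi/2 - b)) ≤ f (ξ + b) := by
  have hp := Real.pi_pos
  have hd : ∀ t, HasDerivAt (fun t => f (ξ + t) - ES (n+2) (Real.pi/2 - b + t))
      (deriv f (ξ + t) - ES (n+1) (Real.pi/2 - |Real.pi/2 - b + t|)) t := by
    intro t
    exact ((hf (ξ + t)).hasDerivAt.comp_const_add ξ t).sub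
      ((ES_deriv n (Real.pi/2 - b + t)).comp_const_add _ t)
  have hm : MonotoneOn (fun t => f (ξ + t) - ES (n+2) (Real.pi/2 - b + t)) (Set.Icc 0 b) := by
    apply monotoneOn_of_deriv_nonneg (convex_Icc _ _)
    · exact fun t _ => (hd t).continuousAt.continuousWithinAt
    · exact fun t _ => (hd t).differentiableAt.differentiableWithinAt
    · intro t ht
      rw [interior_Icc] at ht
      have h1 := ht.1
      have h2 := ht.2
      rw [(hd t).deriv, abs_of_nonneg (by linarith)]
      obtain ⟨c, hc1, hc2, hc3⟩ := ES_surj n (hb (ξ + t))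
      have h3 := hc ξ (ξ + t) b c (by linarith) hb1 hc1 hc2 h hc3.symm
      have h4 : |ξ - (ξ + t)| = t := by
        rw [show ξ - (ξ + t) = -t by ring, abs_neg, abs_of_pos h1]
      rw [h4] at h3
      have h5 := (abs_le.1 h3).2
      rw [← hc3, sub_nonneg]
      apply ES_le n _ hc2 <;> linarith
  have := hm (Set.left_mem_Icc.2 hb0) (Set.right_mem_Icc.2 hb0) hb0
  simp only [add_zero, sub_add_cancel] at this
  linarith

lemma deriv_negneg (f : ℝ → ℝ) : deriv (fun t => - f (-t)) = fun t => deriv f (-t) := by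
  funext t
  have : deriv (fun t => - f (-t)) t = - deriv (fun t => f (-t)) t := deriv.fun_neg
  rw [this, deriv_comp_neg]; ring

lemma half_left {n : ℕ} {f : ℝ → ℝ} (hf : Differentiable ℝ f) (hc : Cmp n (deriv f))
    (hb : ∀ t, |deriv f t| ≤ ES (n+1) (Real.pi/2)) {ξ b : ℝ} (hb0 : 0 ≤ b)
    (hb1 : b ≤ Real.pi/2) (h : deriv f ξ = ES (n+1) b) :
    f (ξ - b) ≤ f ξ - (ES (n+2) (Real.pi/2) - ES (n+2) (Real.pi/2 - b)) := by
  have hd : Differentiable ℝ (fun t => - f (-t)) := by fun_prop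
  have := half (f := fun t => - f (-t)) (n := n) (ξ := -ξ) hd
    (by rw [deriv_negneg]; exact Cmp_negneg hc)
    (by rw [deriv_negneg]; exact fun t => hb (-t)) hb0 hb1
    (by rw [deriv_negneg]; simpa using h)
  simp only [neg_neg] at this
  rw [show -(-ξ + b) = ξ - b by ring] at this
  linarith

/-- upper bound on the derivative, strict version -/
lemma K_aux {n : ℕ} {f : ℝ → ℝ} (hf : Differentiable ℝ f) (hc : Cmp n (deriv f))
    (hb : ∀ t, |deriv f t| ≤ ES (n+1) (Real.pi/2)) {q : ℝ} (hq : q < ES (n+2) (Real.pi/2))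
    (hfq : ∀ t, |f t| ≤ q) :
    ∃ q', q' < ES (n+1) (Real.pi/2) ∧ ∀ t, deriv f t ≤ q' := by
  have hp := Real.pi_pos
  have hq0 : 0 ≤ q := (abs_nonneg _).trans (hfq 0)
  obtain ⟨p, hp1, hp2, hp3⟩ := ES_surj (n+1) (y := ES (n+2) (Real.pi/2) - q)
    (by rw [abs_of_pos (by linarith)]; show _ ≤ ES (n+2) (Real.pi/2); linarith)
  have hp0 : 0 < p := by
    by_contra hcon
    push Not at hcon
    have := ES_le (n+1) hp1 (by linarith) hcon
    rw [ES_zero] at this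
    linarith
  refine ⟨ES (n+1) (Real.pi/2 - p), ES_lt n (by linarith) le_rfl (by linarith), ?_⟩
  intro ξ
  obtain ⟨b, hb1, hb2, hb3⟩ := ES_surj n (hb ξ)
  rw [← hb3]
  rcases le_total b 0 with hb0 | hb0
  · exact ES_le n hb1 (by linarith) (by linarith)
  · have h1 := half hf hc hb hb0 hb2 hb3.symm
    have h2 := half_left hf hc hb hb0 hb2 hb3.symm
    have h3 := (abs_le.1 (hfq (ξ + b))).2
    have h4 := (abs_le.1 (hfq (ξ - b))).1
    have h5 : ES (n+1+1) p ≤ ES (n+1+1) (Real.pi/2 - b) := by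
      rw [hp3]; show _ ≤ ES (n+2) _; linarith
    have h6 := le_of_ES_le (n+1) (by linarith) hp2 h5
    exact ES_le n hb1 (by linarith) (by linarith)

lemma deriv_bound {n : ℕ} {f : ℝ → ℝ} (hf : Differentiable ℝ f) (hc : Cmp n (deriv f))
    (hb : ∀ t, |deriv f t| ≤ ES (n+1) (Real.pi/2))
    (hfq : ∀ t, |f t| ≤ ES (n+2) (Real.pi/2)) {ξ η : ℝ} (h1 : -(Real.pi/2) ≤ η)
    (h2 : η ≤ Real.pi/2) (h : f ξ = ES (n+2) η) :
    deriv f ξ ≤ ES (n+1) (Real.pi/2 - |η|) := by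
  have hp := Real.pi_pos
  have hη : |η| ≤ Real.pi/2 := abs_le.2 ⟨h1, h2⟩
  obtain ⟨b, hb1, hb2, hb3⟩ := ES_surj n (hb ξ)
  rw [← hb3]
  rcases le_total b 0 with hb0 | hb0
  · exact ES_le n hb1 (by linarith [abs_nonneg η]) (by linarith)
  · have h5 := half hf hc hb hb0 hb2 hb3.symm
    have h6 := half_left hf hc hb hb0 hb2 hb3.symm
    have h3 := (abs_le.1 (hfq (ξ + b))).2
    have h4 := (abs_le.1 (hfq (ξ - b))).1
    have e1 : ES (n+1+1) η ≤ ES (n+1+1) (Real.pi/2 - b) := by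
      show ES (n+2) _ ≤ ES (n+2) _; linarith
    have e2 : ES (n+1+1) (-(Real.pi/2 - b)) ≤ ES (n+1+1) η := by
      rw [ES_odd]; show - ES (n+2) _ ≤ ES (n+2) _; linarith
    have e3 := le_of_ES_le (n+1) (by linarith) h2 e1
    have e4 := le_of_ES_le (n+1) h1 (by linarith) e2
    have : |η| ≤ Real.pi/2 - b := abs_le.2 ⟨e4, e3⟩
    exact ES_le n hb1 (by linarith [abs_nonneg η]) (by linarith)

lemma cmp_one_side {n : ℕ} {f : ℝ → ℝ} (hf : Differentiable ℝ f) (hc : Cmp n (deriv f))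
    (hb : ∀ t, |deriv f t| ≤ ES (n+1) (Real.pi/2))
    (hfq : ∀ t, |f t| ≤ ES (n+2) (Real.pi/2)) {x y a b : ℝ} (hxy : x ≤ y)
    (ha1 : -(Real.pi/2) ≤ a) (hb2 : b ≤ Real.pi/2)
    (hx : f x = ES (n+2) a) (hy : f y = ES (n+2) b) : b - a ≤ y - x := by
  have hp := Real.pi_pos
  by_contra hcon
  push Not at hcon
  set D := 1 + (y - x) with hD
  have hDpos : 0 < D := by linarith
  obtain ⟨ε, hε0, hε⟩ : ∃ ε > 0, ε * D < b - a - (y - x) := by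
    refine ⟨(b - a - (y - x)) / (2 * D), by apply div_pos <;> linarith, ?_⟩
    rw [div_mul_eq_mul_div, div_lt_iff₀ (by positivity)]
    nlinarith
  have hε' : a + ε + (1+ε) * (y - x) < b := by rw [hD] at hε; linarith
  have hB : ∀ t, HasDerivAt (fun t => ES (n+2) (a + ε + (1+ε) * (t - x)))
      (ES (n+1) (Real.pi/2 - |a + ε + (1+ε) * (t - x)|) * (1 + ε)) t := by
    intro t
    have h1 : HasDerivAt (fun t => a + ε + (1+ε) * (t - x)) (1 + ε) t := by
      simpa using (((hasDerivAt_id t).sub_const x).const_mul (1+ε)).const_add (a+ε)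
    exact (ES_deriv n _).comp t h1
  have hrange : ∀ t ∈ Set.Icc x y, -(Real.pi/2) < a + ε + (1+ε) * (t - x) ∧
      a + ε + (1+ε) * (t - x) < b := by
    intro t ht
    constructor
    · have : 0 ≤ (1+ε) * (t - x) := mul_nonneg (by linarith) (by linarith [ht.1])
      linarith
    · have : (1+ε) * (t - x) ≤ (1+ε) * (y - x) :=
        mul_le_mul_of_nonneg_left (by linarith [ht.2]) (by linarith)
      linarith
  have key := image_le_of_deriv_right_lt_deriv_boundary (f := f) (f' := deriv f) (a := x) (b := y)
    hf.continuous.continuousOn (fun t _ => (hf t).hasDerivAt.hasDerivWithinAt)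
    (B := fun t => ES (n+2) (a + ε + (1+ε) * (t - x)))
    (B' := fun t => ES (n+1) (Real.pi/2 - |a + ε + (1+ε) * (t - x)|) * (1 + ε))
    (by
      have h1 := hrange x ⟨le_rfl, hxy⟩
      rw [hx]
      exact ES_le (n+1) ha1 (by linarith) (by simp; linarith)) hB
    (by
      intro t ht h
      have h1 := hrange t ⟨ht.1, ht.2.le⟩
      have h2 := deriv_bound hf hc hb hfq h1.1.le (by linarith) h
      have h3 : |a + ε + (1+ε) * (t - x)| < Real.pi/2 := abs_lt.2 ⟨h1.1, by linarith⟩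
      have h4 := ES_pos n (t := Real.pi/2 - |a + ε + (1+ε) * (t - x)|) (by linarith)
        (by linarith [abs_nonneg (a + ε + (1+ε) * (t - x))])
      show deriv f t < _
      nlinarith)
  have h1 := key (Set.right_mem_Icc.2 hxy)
  have h2 := hrange y ⟨hxy, le_rfl⟩
  have h3 := ES_lt (n+1) h2.1.le hb2 h2.2
  rw [hy] at h1
  exact absurd h1 (not_le.2 h3)

lemma cmp_succ {n : ℕ} {f : ℝ → ℝ} (hf : Differentiable ℝ f) (hc : Cmp n (deriv f))
    (hb : ∀ t, |deriv f t| ≤ ES (n+1) (Real.pi/2))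
    (hfq : ∀ t, |f t| ≤ ES (n+2) (Real.pi/2)) : Cmp (n+1) f := by
  have main : ∀ x y a b, x ≤ y → -(Real.pi/2) ≤ a → a ≤ Real.pi/2 → -(Real.pi/2) ≤ b →
      b ≤ Real.pi/2 → f x = ES (n+2) a → f y = ES (n+2) b → |a - b| ≤ y - x := by
    intro x y a b hxy h1 h2 h3 h4 h5 h6
    have e1 := cmp_one_side hf hc hb hfq hxy h1 h4 h5 h6
    have hd : deriv (fun t => - f t) = fun t => - deriv f t := funext fun t => deriv.fun_neg
    have e2 := cmp_one_side (n := n) (f := fun t => - f t) (a := -a) (b := -b) hf.neg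
      (by rw [hd]; exact Cmp_neg hc)
      (by rw [hd]; intro t; rw [abs_neg]; exact hb t)
      (by intro t; rw [abs_neg]; exact hfq t) hxy (by linarith) (by linarith)
      (by rw [ES_odd, h5]) (by rw [ES_odd, h6])
    rw [abs_le]; constructor <;> linarith
  intro x y a b h1 h2 h3 h4 h5 h6
  rcases le_total x y with h | h
  · rw [abs_of_nonpos (by linarith : x - y ≤ 0)]
    have := main x y a b h h1 h2 h3 h4 h5 h6
    linarith
  · rw [abs_of_nonneg (by linarith : 0 ≤ x - y), abs_sub_comm]
    exact main y x b a h h3 h4 h1 h2 h6 h5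

lemma K_ineq {n : ℕ} (H : ∀ g, WK 1 n g → (∀ t, |g t| ≤ ES (n+1) (Real.pi/2)) → Cmp n g)
    {f : ℝ → ℝ} (hf : WK 1 (n+1) f) (hfq : ∀ t, |f t| ≤ ES (n+2) (Real.pi/2)) (t : ℝ) :
    |deriv f t| ≤ ES (n+1) (Real.pi/2) := by
  set A := ES (n+1) (Real.pi/2) with hA
  have hA0 : 0 < A := ES_A_pos n
  have hA1 : 0 < ES (n+2) (Real.pi/2) := ES_A_pos (n+1)
  by_contra hcon
  push Not at hcon
  obtain ⟨K', hK'⟩ := WK_bdd (n+1) 1 _ f hf hfq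
  have hbdd : BddAbove (Set.range fun t => |deriv f t|) := ⟨K', Set.forall_mem_range.2 hK'⟩
  set m := ⨆ t, |deriv f t| with hm
  have hle : ∀ t, |deriv f t| ≤ m := fun t => le_ciSup hbdd t
  have hmA : A < m := hcon.trans_le (hle t)
  have hm0 : 0 < m := hA0.trans hmA
  set μ : ℝ := (A / m) ^ (1 / ((n+1:ℕ):ℝ)) with hμ
  have hμ0 : 0 < μ := Real.rpow_pos_of_pos (div_pos hA0 hm0) _
  have hμp : μ ^ (n+1) = A / m := by
    rw [hμ, ← Real.rpow_natCast, ← Real.rpow_mul (div_pos hA0 hm0).le,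
      one_div_mul_cancel (by positivity), Real.rpow_one]
  have hμ1 : μ < 1 := by
    apply Real.rpow_lt_one (div_pos hA0 hm0).le ((div_lt_one hm0).2 hmA) (by positivity)
  set F : ℝ → ℝ := fun t => μ ^ (n+2) * f (μ⁻¹ * t) with hF
  have hFW : WK 1 (n+1) F := by
    have := WK_scale (n+1) 1 f (μ^(n+2)) μ⁻¹ hf
    convert this using 1
    rw [abs_of_pos (by positivity), abs_of_pos (by positivity), inv_pow, mul_one]
    exact (mul_inv_cancel₀ (by positivity)).symm
  have hFd : ∀ t, deriv F t = μ ^ (n+1) * deriv f (μ⁻¹ * t) := by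
    intro t
    have h1 : HasDerivAt (fun t => μ⁻¹ * t) μ⁻¹ t := by
      simpa using (hasDerivAt_id t).const_mul μ⁻¹
    have h2 := ((hf.1 (μ⁻¹ * t)).hasDerivAt.comp t h1).const_mul (μ ^ (n+2))
    have h3 : deriv F t = _ := h2.deriv
    rw [h3, pow_succ _ (n+1)]; field_simp
  have hFb : ∀ t, |deriv F t| ≤ A := by
    intro t
    rw [hFd, abs_mul, abs_of_pos (by positivity), hμp]
    calc A / m * |deriv f (μ⁻¹ * t)| ≤ A / m * m := by gcongr; exact hle _
      _ = A := by field_simp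
  have hq : μ ^ (n+2) * ES (n+2) (Real.pi/2) < ES (n+2) (Real.pi/2) := by
    have : μ ^ (n+2) < 1 := pow_lt_one₀ hμ0.le hμ1 (by omega)
    nlinarith
  have hFq : ∀ t, |F t| ≤ μ ^ (n+2) * ES (n+2) (Real.pi/2) := by
    intro t
    rw [hF]
    simp only
    rw [abs_mul, abs_of_pos (by positivity)]
    gcongr
    exact hfq _
  have hcF : Cmp n (deriv F) := H _ hFW.2 hFb
  obtain ⟨q1, hq1, hq1'⟩ := K_aux hFW.1 hcF hFb hq hFq
  have hd : deriv (fun t => - F t) = fun t => - deriv F t := funext fun t => deriv.fun_neg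
  obtain ⟨q2, hq2, hq2'⟩ := K_aux (n := n) (f := fun t => - F t) hFW.1.neg
    (by rw [hd]; exact Cmp_neg hcF) (by rw [hd]; intro t; rw [abs_neg]; exact hFb t) hq
    (by intro t; rw [abs_neg]; exact hFq t)
  rw [hd] at hq2'
  have hlt : max q1 q2 < A := max_lt hq1 hq2
  have hall : ∀ t, |deriv f t| ≤ max q1 q2 * (m / A) := by
    intro t
    have h1 : |deriv F (μ * t)| ≤ max q1 q2 := by
      rw [abs_le]
      have e1 := hq1' (μ * t)
      have e2 := hq2' (μ * t)
      simp only at e2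
      constructor
      · linarith [le_max_right q1 q2]
      · exact e1.trans (le_max_left _ _)
    rw [hFd, abs_mul, abs_of_pos (by positivity), hμp, inv_mul_cancel_left₀ hμ0.ne'] at h1
    calc |deriv f t| = (A / m * |deriv f t|) * (m / A) := by field_simp
      _ ≤ _ := by gcongr
  have h1 : m ≤ max q1 q2 * (m / A) := ciSup_le hall
  have h2 : max q1 q2 * (m / A) < A * (m / A) :=
    mul_lt_mul_of_pos_right hlt (div_pos hm0 hA0)
  have h3 : A * (m / A) = m := by field_simp
  linarith

lemma cmp_all (n : ℕ) : ∀ g, WK 1 n g → (∀ t, |g t| ≤ ES (n+1) (Real.pi/2)) → Cmp n g := by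
  induction n with
  | zero =>
    intro g hg _ x y a b h1 h2 h3 h4 h5 h6
    rw [zero_add, ES_one h1 h2] at h5
    rw [zero_add, ES_one h3 h4] at h6
    rw [← h5, ← h6]
    simpa using hg x y
  | succ n ih =>
    intro g hg hb
    have hK := K_ineq ih hg hb
    exact cmp_succ hg.1 (ih _ hg.2 hK) hK hb

lemma iter_bound (k : ℕ) : ∀ (n : ℕ) (f : ℝ → ℝ), WK 1 (n + k) f →
    (∀ t, |f t| ≤ ES (n + k + 1) (Real.pi/2)) →
    ∀ t, |iteratedDeriv k f t| ≤ ES (n+1) (Real.pi/2) := by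
  induction k with
  | zero => intro n f _ h t; simpa using h t
  | succ k ih =>
    intro n f hf hb
    rw [iteratedDeriv_succ']
    exact ih n _ hf.2 (K_ineq (cmp_all _) hf hb)

lemma WK_of_contDiff (n : ℕ) : ∀ (K : ℝ) (f : ℝ → ℝ), ContDiff ℝ n f →
    (∀ x y, |iteratedDeriv n f x - iteratedDeriv n f y| ≤ K * |x - y|) → WK K n f := by
  induction n with
  | zero => 
    intro K f _ h
    simp only [iteratedDeriv_zero] at h
    exact h
  | succ n ih =>
    intro K f hf h
    rw [iteratedDeriv_succ'] at h
    have h1 : ContDiff ℝ ((n:WithTop ℕ∞) + 1) f := by exact_mod_cast hf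
    have h2 := contDiff_succ_iff_deriv.1 h1
    exact ⟨h2.1, ih K _ h2.2.2 h⟩

lemma iter_scale (k : ℕ) : ∀ (f : ℝ → ℝ) (a c : ℝ),
    iteratedDeriv k (fun t => a * f (c * t)) = fun t => a * c ^ k * iteratedDeriv k f (c * t) := by
  induction k with
  | zero => intro f a c; simp
  | succ k ih =>
    intro f a c
    have e : deriv (fun t => a * f (c * t)) = fun t => (a * c) * deriv f (c * t) := by
      funext t
      rw [deriv_const_mul_field, deriv_comp_mul_left, smul_eq_mul]; ring
    rw [iteratedDeriv_succ', e, ih, iteratedDeriv_succ']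
    funext t
    ring

lemma core (n k : ℕ) (f : ℝ → ℝ) {D N : ℝ} (hD : 0 < D) (hN : 0 < N)
    (hf : WK N (n + k) f) (hb : ∀ t, |f t| ≤ D) (t : ℝ) :
    |iteratedDeriv k f t| ≤
      (ES (n+1) (Real.pi/2) / (ES (n+k+1) (Real.pi/2)) ^ (1 - (k:ℝ)/((n+k+1:ℕ):ℝ))) *
      D ^ (1 - (k:ℝ)/((n+k+1:ℕ):ℝ)) * N ^ ((k:ℝ)/((n+k+1:ℕ):ℝ)) := by
  set A := ES (n+1) (Real.pi/2) with hA
  set B := ES (n+k+1) (Real.pi/2) with hB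
  have hA0 : 0 < A := ES_A_pos n
  have hB0 : 0 < B := ES_A_pos (n+k)
  set X := B * N / D with hX
  have hX0 : 0 < X := by positivity
  set r : ℝ := ((n+k+1:ℕ):ℝ) with hr
  have hr0 : 0 < r := by positivity
  set l : ℝ := X ^ (1 / r) with hl
  have hl0 : 0 < l := Real.rpow_pos_of_pos hX0 _
  have hlr : l ^ (n+k+1) = X := by
    rw [hl, ← Real.rpow_natCast, ← Real.rpow_mul hX0.le, one_div_mul_cancel hr0.ne', Real.rpow_one]
  have hW : WK 1 (n+k) (fun t => (X / N) * f (l⁻¹ * t)) := by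
    have := WK_scale (n+k) N f (X / N) l⁻¹ hf
    convert this using 1
    rw [abs_of_pos (by positivity), abs_of_pos (by positivity), inv_pow, hlr]
    field_simp
  have h1 := iter_bound k n _ hW (by
    intro t
    rw [abs_mul, abs_of_pos (by positivity)]
    calc X / N * |f (l⁻¹ * t)| ≤ X / N * D := by gcongr; exact hb _
      _ = B := by rw [hX]; field_simp) (l * t)
  rw [iter_scale] at h1
  simp only at h1
  rw [inv_mul_cancel_left₀ hl0.ne', abs_mul, abs_of_pos (by positivity)] at h1
  have h2 : |iteratedDeriv k f t| ≤ A * (N / X * l ^ k) := by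
    calc |iteratedDeriv k f t| = (X / N * l⁻¹ ^ k * |iteratedDeriv k f t|) * (N / X * l ^ k) := by
          rw [inv_pow]; field_simp
      _ ≤ _ := by gcongr
  refine h2.trans (le_of_eq ?_)
  have e1 : l ^ k = X ^ ((k:ℝ) / r) := by
    rw [hl, ← Real.rpow_natCast, ← Real.rpow_mul hX0.le]; congr 1; ring
  set θ := (k:ℝ) / r with hθ
  have e2 : N / X * X ^ θ = N * (X ^ (1 - θ))⁻¹ := by
    rw [Real.rpow_sub hX0, Real.rpow_one]; field_simp
  have e3 : X ^ (1 - θ) = B ^ (1 - θ) * N ^ (1 - θ) / D ^ (1 - θ) := by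
    rw [hX, Real.div_rpow (by positivity) hD.le, Real.mul_rpow hB0.le hN.le]
  have e4 : N = N ^ (1 - θ) * N ^ θ := by
    rw [← Real.rpow_add hN]; simp
  have p1 := Real.rpow_pos_of_pos hN (1 - θ)
  have p2 := Real.rpow_pos_of_pos hB0 (1 - θ)
  have p3 := Real.rpow_pos_of_pos hD (1 - θ)
  rw [e1, e2, e3]
  nth_rewrite 1 [e4]
  field_simp

lemma final_aux (n k : ℕ) (hk : 0 < k) (f : ℝ → ℝ) (hf : MemL (n+k+1) f) (t : ℝ) :
    |iteratedDeriv k f t| ≤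
      (ES (n+1) (Real.pi/2) / (ES (n+k+1) (Real.pi/2)) ^ (1 - (k:ℝ)/((n+k+1:ℕ):ℝ))) *
      (M 0 f) ^ (1 - (k:ℝ)/((n+k+1:ℕ):ℝ)) * (M (n+k+1) f) ^ ((k:ℝ)/((n+k+1:ℕ):ℝ)) := by
  obtain ⟨_, ⟨C, hC⟩, hcd, L, hL⟩ := hf
  rw [Nat.add_sub_cancel] at hcd hL
  have h0 : ∀ t, |f t| ≤ M 0 f := by
    intro t
    have := le_ciSup (f := fun t => |f t|) ⟨C, Set.forall_mem_range.2 hC⟩ t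
    simpa [M, unif] using this
  have hd : ∀ t, |deriv (iteratedDeriv (n+k) f) t| ≤ M (n+k+1) f := by
    intro t
    have hb : ∀ t, |deriv (iteratedDeriv (n+k) f) t| ≤ L := fun t => norm_deriv_le_of_lipschitz hL
    have := le_ciSup (f := fun t => |deriv (iteratedDeriv (n+k) f) t|)
      ⟨L, Set.forall_mem_range.2 hb⟩ t
    simpa [M, unif, iteratedDeriv_succ] using this
  have hlip : ∀ x y, |iteratedDeriv (n+k) f x - iteratedDeriv (n+k) f y|
      ≤ M (n+k+1) f * |x - y| := by
    intro x y
    have hac : AbsolutelyContinuousOnInterval (iteratedDeriv (n+k) f) y x :=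
      LipschitzOnWith.absolutelyContinuousOnInterval hL.lipschitzOnWith
    rw [← hac.integral_deriv_eq_sub]
    exact intervalIntegral.norm_integral_le_of_norm_le_const (a := y) (b := x)
      (f := deriv (iteratedDeriv (n+k) f)) (C := M (n+k+1) f) (fun u _ => hd u)
  have hM0 : 0 ≤ M 0 f := (abs_nonneg _).trans (h0 0)
  have hMr : 0 ≤ M (n+k+1) f := (abs_nonneg _).trans (hd 0)
  have hev : ∀ ε : ℝ, 0 < ε → |iteratedDeriv k f t| ≤
      (ES (n+1) (Real.pi/2) / (ES (n+k+1) (Real.pi/2)) ^ (1 - (k:ℝ)/((n+k+1:ℕ):ℝ))) *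
      (M 0 f + ε) ^ (1 - (k:ℝ)/((n+k+1:ℕ):ℝ)) *
      (M (n+k+1) f + ε) ^ ((k:ℝ)/((n+k+1:ℕ):ℝ)) := by
    intro ε hε
    apply core n k f (by linarith) (by linarith)
    · apply WK_of_contDiff _ _ _ hcd
      intro x y
      refine (hlip x y).trans ?_
      gcongr
      linarith
    · intro t; linarith [h0 t]
  have q1 : 0 ≤ 1 - (k:ℝ)/((n+k+1:ℕ):ℝ) := by
    rw [sub_nonneg, div_le_one (by positivity)]
    exact_mod_cast (by omega : k ≤ n+k+1)
  have q2 : 0 ≤ (k:ℝ)/((n+k+1:ℕ):ℝ) := by positivity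
  have hcont : Continuous (fun ε : ℝ =>
      (ES (n+1) (Real.pi/2) / (ES (n+k+1) (Real.pi/2)) ^ (1 - (k:ℝ)/((n+k+1:ℕ):ℝ))) *
      (M 0 f + ε) ^ (1 - (k:ℝ)/((n+k+1:ℕ):ℝ)) *
      (M (n+k+1) f + ε) ^ ((k:ℝ)/((n+k+1:ℕ):ℝ))) := by
    refine (continuous_const.mul ?_).mul ?_
    · exact (continuous_const.add continuous_id).rpow_const (fun _ => Or.inr q1)
    · exact (continuous_const.add continuous_id).rpow_const (fun _ => Or.inr q2)
  have ht := (hcont.tendsto 0).mono_left (nhdsWithin_le_nhds (s := Set.Ioi 0))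
  simp only [add_zero] at ht
  apply ge_of_tendsto ht
  filter_upwards [self_mem_nhdsWithin] with ε hε
  exact hev ε hε

/-- **Kolmogorov's inequality.** For `0 < k < r` and `f ∈ L^r_{∞,∞}`, the derivative
`f⁽ᵏ⁾` is bounded and
`M_k(f) ≤ (‖φ_{r-k}‖ / ‖φ_r‖^{1-k/r}) · M_0(f)^{1-k/r} · M_r(f)^{k/r}`. -/
theorem stmt4 (k r : ℕ) (hk : 0 < k) (hkr : k < r) (f : ℝ → ℝ) (hf : MemL r f) :
    (∃ C : ℝ, ∀ t : ℝ, |iteratedDeriv k f t| ≤ C) ∧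
    M k f ≤ (unif (eulerPhi (r - k)) / (unif (eulerPhi r)) ^ (1 - (k:ℝ)/(r:ℝ))) *
      (M 0 f) ^ (1 - (k:ℝ)/(r:ℝ)) * (M r f) ^ ((k:ℝ)/(r:ℝ)) := by

  obtain ⟨n, rfl⟩ : ∃ n, r = n + k + 1 := ⟨r - k - 1, by omega⟩
  have e : n + k + 1 - k = n + 1 := by omega
  have h := final_aux n k hk f hf
  rw [e, unif_euler, unif_euler]
  exact ⟨⟨_, h⟩, ciSup_le h⟩
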